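/- If X and Y are conditionally independent given Z and k_𝒳̈, k_𝒴 are bounded measurable kernels on 𝒳̈ and 𝒴 respectively, then the witness function vanishes identically: Δ(t^{(1)},t^{(2)}) = 0 for every (t^{(1)},t^{(2)}) ∈ 𝒳̈ × 𝒴. Consequently, for any choice of locations, the random vector u_1 built from one sample satisfies E[u_1] = 0. -/

import Mathlib

open MeasureTheory ProbabilityTheory Filter Topology Asymptotics
open scoped RealInnerProductSpace

noncomputable section

namespace CIPaper

/-- A positive definite kernel. -/
def PosDefKernel {D : Type*} (k : D → D → ℝ) : Prop :=
  ∀ (n : ℕ) (x : Fin n → D) (c : Fin n → ℝ),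
    0 ≤ ∑ i : Fin n, ∑ j : Fin n, c i * c j * k (x i) (x j)

/-- The mean embedding of `ν` with respect to the kernel `k`. -/
def meanEmbed {D : Type*} [MeasurableSpace D] (k : D → D → ℝ) (ν : Measure D) (t : D) : ℝ :=
  ∫ x, k x t ∂ν

/-- A kernel is characteristic if the mean embedding is injective on probability measures. -/
def Characteristic {D : Type*} [MeasurableSpace D] (k : D → D → ℝ) : Prop :=
  ∀ P Q : Measure D, IsProbabilityMeasure P → IsProbabilityMeasure Q →
    (∀ t, meanEmbed k P t = meanEmbed k Q t) → P = Q

def BoundedKernel {D : Type*} (k : D → D → ℝ) : Prop := ∃ C, ∀ x y, |k x y| ≤ C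

/-- Assumption 1 of the paper, for the tensor product kernel built from `kX` and `kY` :
the tensor kernel is positive definite, characteristic, bounded, continuous and analytic. -/
structure Assumption1 {DX DY : Type*} [MeasurableSpace DX] [MeasurableSpace DY]
    [NormedAddCommGroup DX] [NormedSpace ℝ DX] [NormedAddCommGroup DY] [NormedSpace ℝ DY]
    (kX : DX → DX → ℝ) (kY : DY → DY → ℝ) : Prop where
  posdef : PosDefKernel fun p q : DX × DY => kX p.1 q.1 * kY p.2 q.2
  charac : Characteristic fun p q : DX × DY => kX p.1 q.1 * kY p.2 q.2
  bounded : BoundedKernel fun p q : DX × DY => kX p.1 q.1 * kY p.2 q.2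
  continuous : Continuous fun pq : (DX × DY) × (DX × DY) => kX pq.1.1 pq.2.1 * kY pq.1.2 pq.2.2
  analytic : ∀ p : DX × DY, AnalyticOnNhd ℝ (fun q : DX × DY => kX p.1 q.1 * kY p.2 q.2) Set.univ

/-- The random metric `d_{p,J}` between two measures, with locations `t`. -/
def dpJ {D : Type*} [MeasurableSpace D] (k : D → D → ℝ) (p : ℕ) {J : ℕ}
    (t : Fin J → D) (P Q : Measure D) : ℝ :=
  ((J : ℝ)⁻¹ * ∑ j : Fin J, |meanEmbed k P (t j) - meanEmbed k Q (t j)| ^ p) ^ ((p : ℝ)⁻¹)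

/-- `P` is the measure `P_{Ẍ⊗Y|Z}` of the paper : a Borel probability measure with
`P(A×B) = E[E[1_A(Ẍ)|Z]·E[1_B(Y)|Z]]` for all measurable `A`, `B`. -/
def IsCondProdMeasure {Ω : Type*} [MeasurableSpace Ω] (μ : Measure Ω)
    {DX DZ DY : Type*} [MeasurableSpace DX] [MeasurableSpace DZ] [MeasurableSpace DY]
    (X : Ω → DX) (Z : Ω → DZ) (Y : Ω → DY) (P : Measure ((DX × DZ) × DY)) : Prop :=
  IsProbabilityMeasure P ∧
    ∀ (A : Set (DX × DZ)) (B : Set DY), MeasurableSet A → MeasurableSet B →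
      (P (A ×ˢ B)).toReal =
        ∫ ω, ((μ[fun ω' => A.indicator (fun _ => (1 : ℝ)) (X ω', Z ω') |
                MeasurableSpace.comap Z inferInstance]) ω)
            * ((μ[fun ω' => B.indicator (fun _ => (1 : ℝ)) (Y ω') |
                MeasurableSpace.comap Z inferInstance]) ω) ∂μ

/-- The witness function `Δ`. -/
def witness {Ω : Type*} [MeasurableSpace Ω] (μ : Measure Ω)
    {DX DZ DY : Type*} [MeasurableSpace DZ]
    (kX : DX × DZ → DX × DZ → ℝ) (kY : DY → DY → ℝ)
    (X : Ω → DX) (Z : Ω → DZ) (Y : Ω → DY) (t1 : DX × DZ) (t2 : DY) : ℝ :=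
  ∫ ω, (kX t1 (X ω, Z ω) -
          (μ[fun ω' => kX t1 (X ω', Z ω') | MeasurableSpace.comap Z inferInstance]) ω)
      * (kY t2 (Y ω) -
          (μ[fun ω' => kY t2 (Y ω') | MeasurableSpace.comap Z inferInstance]) ω) ∂μ

/-- Cramér–Wold characterization: `ν` is the centered Gaussian measure on `ℝ^J` with
covariance matrix `S`. -/
def IsCenteredGaussian {J : ℕ} (S : Matrix (Fin J) (Fin J) ℝ) (ν : Measure (Fin J → ℝ)) : Prop :=
  IsProbabilityMeasure ν ∧
    ∀ a : Fin J → ℝ,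
      ν.map (fun v => ∑ j, a j * v j) =
        gaussianReal 0 (Real.toNNReal (∑ i, ∑ j, a i * S i j * a j))

/-- Convergence in distribution (weak convergence of the image laws). -/
def TendstoInDistribution {Ω : Type*} [MeasurableSpace Ω] (μ : Measure Ω) {E : Type*}
    [TopologicalSpace E] [MeasurableSpace E] (W : ℕ → Ω → E) (ν : Measure E) : Prop :=
  ∀ f : BoundedContinuousFunction E ℝ,
    Tendsto (fun n : ℕ => ∫ ω, f (W n ω) ∂μ) atTop (𝓝 (∫ x, f x ∂ν))

/-- The one-sample statistic `u_i(j)` of the paper (oracle version), where `e1`, `e2` are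
the conditional mean functions. -/
def uStat {Ω DX DZ DY : Type*} (kX : DX × DZ → DX × DZ → ℝ) (kY : DY → DY → ℝ)
    (e1 : DX × DZ → DZ → ℝ) (e2 : DY → DZ → ℝ)
    (xS : ℕ → Ω → DX) (zS : ℕ → Ω → DZ) (yS : ℕ → Ω → DY)
    {J : ℕ} (t : Fin J → (DX × DZ) × DY) (i : ℕ) (j : Fin J) (ω : Ω) : ℝ :=
  (kX (t j).1 (xS i ω, zS i ω) - e1 (t j).1 (zS i ω)) *
    (kY (t j).2 (yS i ω) - e2 (t j).2 (zS i ω))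

/-- `S_n`, the empirical mean of the `u_i`. -/
def SStat {Ω DX DZ DY : Type*} (kX : DX × DZ → DX × DZ → ℝ) (kY : DY → DY → ℝ)
    (e1 : DX × DZ → DZ → ℝ) (e2 : DY → DZ → ℝ)
    (xS : ℕ → Ω → DX) (zS : ℕ → Ω → DZ) (yS : ℕ → Ω → DY)
    {J : ℕ} (t : Fin J → (DX × DZ) × DY) (n : ℕ) (ω : Ω) : Fin J → ℝ :=
  fun j => (n : ℝ)⁻¹ * ∑ i ∈ Finset.range n, uStat kX kY e1 e2 xS zS yS t i j ω

/-- The covariance matrix `Σ = E[u₁ u₁ᵀ]`. -/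
def covMat {Ω DX DZ DY : Type*} [MeasurableSpace Ω] (μ : Measure Ω)
    (kX : DX × DZ → DX × DZ → ℝ) (kY : DY → DY → ℝ)
    (e1 : DX × DZ → DZ → ℝ) (e2 : DY → DZ → ℝ)
    (xS : ℕ → Ω → DX) (zS : ℕ → Ω → DZ) (yS : ℕ → Ω → DY)
    {J : ℕ} (t : Fin J → (DX × DZ) × DY) : Matrix (Fin J) (Fin J) ℝ :=
  Matrix.of fun j j' =>
    ∫ ω, uStat kX kY e1 e2 xS zS yS t 0 j ω * uStat kX kY e1 e2 xS zS yS t 0 j' ω ∂μ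

/-- The empirical covariance matrix `Σ̂_n` of the oracle `u_i`. -/
def covHat {Ω DX DZ DY : Type*} (kX : DX × DZ → DX × DZ → ℝ) (kY : DY → DY → ℝ)
    (e1 : DX × DZ → DZ → ℝ) (e2 : DY → DZ → ℝ)
    (xS : ℕ → Ω → DX) (zS : ℕ → Ω → DZ) (yS : ℕ → Ω → DY)
    {J : ℕ} (t : Fin J → (DX × DZ) × DY) (n : ℕ) (ω : Ω) : Matrix (Fin J) (Fin J) ℝ :=
  Matrix.of fun j j' => (n : ℝ)⁻¹ * ∑ i ∈ Finset.range n,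
    uStat kX kY e1 e2 xS zS yS t i j ω * uStat kX kY e1 e2 xS zS yS t i j' ω

/-- The regularized least squares estimator built from the first `r` samples `zs` with
targets `target`, kernel `kZ` and regularization parameter `lam`. -/
def rls {DZ : Type*} (kZ : DZ → DZ → ℝ) (zs : ℕ → DZ) (target : ℕ → ℝ)
    (r : ℕ) (lam : ℝ) (z : DZ) : ℝ :=
  ∑ i : Fin r,
    (((Matrix.of fun i l : Fin r => kZ (zs i) (zs l)) +
        ((r : ℝ) * lam) • (1 : Matrix (Fin r) (Fin r) ℝ))⁻¹.mulVec
      fun i : Fin r => target i) i * kZ (zs i) z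

/-- The statistic `ũ_{i,r}(j)` built from the RLS estimators. -/
def uTildeStat {Ω DX DZ DY : Type*} (kX : DX × DZ → DX × DZ → ℝ) (kY : DY → DY → ℝ)
    {J : ℕ} (kZ1 kZ2 : Fin J → DZ → DZ → ℝ)
    (xS : ℕ → Ω → DX) (zS : ℕ → Ω → DZ) (yS : ℕ → Ω → DY)
    (t : Fin J → (DX × DZ) × DY) (r : ℕ) (lam : ℝ) (i : ℕ) (j : Fin J) (ω : Ω) : ℝ :=
  (kX (t j).1 (xS i ω, zS i ω) -
      rls (kZ1 j) (fun l => zS l ω) (fun l => kX (t j).1 (xS l ω, zS l ω)) r lam (zS i ω)) *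
    (kY (t j).2 (yS i ω) -
      rls (kZ2 j) (fun l => zS l ω) (fun l => kY (t j).2 (yS l ω)) r lam (zS i ω))

/-- `S̃_{n,r}`. -/
def STilde {Ω DX DZ DY : Type*} (kX : DX × DZ → DX × DZ → ℝ) (kY : DY → DY → ℝ)
    {J : ℕ} (kZ1 kZ2 : Fin J → DZ → DZ → ℝ)
    (xS : ℕ → Ω → DX) (zS : ℕ → Ω → DZ) (yS : ℕ → Ω → DY)
    (t : Fin J → (DX × DZ) × DY) (n r : ℕ) (lam : ℝ) (ω : Ω) : Fin J → ℝ :=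
  fun j => (n : ℝ)⁻¹ * ∑ i ∈ Finset.range n,
    uTildeStat kX kY kZ1 kZ2 xS zS yS t r lam i j ω

/-- `Σ_{n,r}`, the empirical covariance matrix of the `ũ_{i,r}`. -/
def covTilde {Ω DX DZ DY : Type*} (kX : DX × DZ → DX × DZ → ℝ) (kY : DY → DY → ℝ)
    {J : ℕ} (kZ1 kZ2 : Fin J → DZ → DZ → ℝ)
    (xS : ℕ → Ω → DX) (zS : ℕ → Ω → DZ) (yS : ℕ → Ω → DY)
    (t : Fin J → (DX × DZ) × DY) (n r : ℕ) (lam : ℝ) (ω : Ω) : Matrix (Fin J) (Fin J) ℝ :=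
  Matrix.of fun j j' => (n : ℝ)⁻¹ * ∑ i ∈ Finset.range n,
    uTildeStat kX kY kZ1 kZ2 xS zS yS t r lam i j ω *
      uTildeStat kX kY kZ1 kZ2 xS zS yS t r lam i j' ω

open scoped Classical in
/-- The inverse square root `M^{-1/2}` of a positive semidefinite matrix. -/
def invSqrtMat {J : ℕ} (M : Matrix (Fin J) (Fin J) ℝ) : Matrix (Fin J) (Fin J) ℝ :=
  if h : M.PosSemidef then
    (h.1.eigenvectorUnitary.1 * Matrix.diagonal (Real.sqrt ∘ h.1.eigenvalues) *
      (star h.1.eigenvectorUnitary : Matrix (Fin J) (Fin J) ℝ))⁻¹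
  else 0

/-- The chi-square distribution with `J` degrees of freedom, realized as the law of the sum of
squares of `J` independent standard Gaussians. -/
def chiSq (J : ℕ) : Measure ℝ :=
  (Measure.pi fun _ : Fin J => gaussianReal 0 1).map fun v => ∑ j, v j ^ 2

/-- Assumption 2 of the paper for the operator `L` on `L²(P_Z)` :
`Tr((L + λ)⁻¹ L) ≤ Q λ^{-γ}`, the trace of the positive operator being computed in any
Hilbert basis. -/
def TraceAssumption {DZ : Type*} [MeasurableSpace DZ] (PZ : Measure DZ)
    (L : Lp ℝ 2 PZ →L[ℝ] Lp ℝ 2 PZ) (Q γ : ℝ) : Prop :=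
  ∀ lam : ℝ, 0 < lam → ∀ (ι : Type) (e : HilbertBasis ι ℝ (Lp ℝ 2 PZ)),
    ∑' i, ⟪(Ring.inverse (L + lam • (1 : Lp ℝ 2 PZ →L[ℝ] Lp ℝ 2 PZ)) * L) (e i), e i⟫ ≤
      Q * lam ^ (-γ)

/-- `P = L^s` : `P` is self-adjoint and acts as `c ^ s` on every eigenvector of `L`
(this determines the fractional power, via functional calculus, of a positive self-adjoint
compact operator). -/
def IsFracPower {H : Type*} [NormedAddCommGroup H] [InnerProductSpace ℝ H]
    (L : H →L[ℝ] H) (s : ℝ) (P : H →L[ℝ] H) : Prop :=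
  (∀ v w : H, ⟪P v, w⟫ = ⟪v, P w⟫) ∧
    ∀ (c : ℝ) (v : H), L v = c • v → P v = c ^ s • v

end CIPaper

open CIPaper

theorem ci_aux {Ω A B C : Type*} [MeasurableSpace Ω] [StandardBorelSpace Ω] [Nonempty Ω]
    [MeasurableSpace A] [StandardBorelSpace A] [Nonempty A]
    [MeasurableSpace B] [MeasurableSpace C] [StandardBorelSpace C] [Nonempty C]
    (μ : Measure Ω) [IsProbabilityMeasure μ]
    (X : Ω → A) (Z : Ω → B) (Y : Ω → C)
    (hX : Measurable X) (hZ : Measurable Z) (hY : Measurable Y)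
    (hH0 : CondIndepFun (MeasurableSpace.comap Z inferInstance) hZ.comap_le X Y μ)
    (f : A × B → ℝ) (g : C → ℝ) (hf : Measurable f) (hg : Measurable g)
    (Cf Cg : ℝ) (hCf : ∀ a, |f a| ≤ Cf) (hCg : ∀ a, |g a| ≤ Cg) :
    ∫ ω, (f (X ω, Z ω) -
          (μ[fun ω' => f (X ω', Z ω') | MeasurableSpace.comap Z inferInstance]) ω)
      * (g (Y ω) -
          (μ[fun ω' => g (Y ω') | MeasurableSpace.comap Z inferInstance]) ω) ∂μ = 0 := by
  have hZX : Measurable (fun ω => (Z ω, X ω)) := hZ.prodMk hX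
  set m : MeasurableSpace Ω := MeasurableSpace.comap Z inferInstance with hm
  set M : MeasurableSpace Ω := MeasurableSpace.comap (fun ω => (Z ω, X ω)) inferInstance with hM
  have hMle : M ≤ _ := hZX.comap_le
  have hmle : m ≤ _ := hZ.comap_le
  have hZXM : Measurable[M] (fun ω => (Z ω, X ω)) := comap_measurable _
  have hmM : m ≤ M := by
    have : Measurable[M] Z := measurable_fst.comp hZXM
    exact this.comap_le
  have hfM : Measurable[M] (fun ω => f (X ω, Z ω)) :=
    (hf.comp measurable_swap).comp hZXM
  have hgi : Integrable (fun ω => g (Y ω)) μ :=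
    Integrable.of_bound (hg.comp hY).aestronglyMeasurable Cg (.of_forall fun ω => hCg _)
  have hkey : μ[fun ω => g (Y ω) | M] =ᵐ[μ] μ[fun ω => g (Y ω) | m] := by
    have h1 := condExp_ae_eq_integral_condDistrib (μ := μ) hZX hY.aemeasurable
      hg.stronglyMeasurable hgi
    have h2 := condExp_ae_eq_integral_condDistrib (μ := μ) hZ hY.aemeasurable
      hg.stronglyMeasurable hgi
    have h3 := ae_of_ae_map hZX.aemeasurable
      ((condIndepFun_iff_condDistrib_prod_ae_eq_prodMkRight hY hX hZ).1 hH0)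
    filter_upwards [h1, h2, h3] with ω a1 a2 a3
    rw [a1, a2, a3]
    simp
  set F : Ω → ℝ := (fun ω => f (X ω, Z ω)) - μ[fun ω => f (X ω, Z ω) | m] with hF
  set G : Ω → ℝ := (fun ω => g (Y ω)) - μ[fun ω => g (Y ω) | m] with hG
  change ∫ ω, (F * G) ω ∂μ = 0
  have hFM : StronglyMeasurable[M] F :=
    hfM.stronglyMeasurable.sub (stronglyMeasurable_condExp.mono hmM)
  have hGi : Integrable G μ := hgi.sub integrable_condExp
  have hFb : ∀ᵐ ω ∂μ, ‖F ω‖ ≤ |Cf| + |Cf| := by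
    have := ae_bdd_condExp_of_ae_bdd (m := m) (μ := μ) (R := ⟨|Cf|, abs_nonneg _⟩)
      (f := fun ω => f (X ω, Z ω)) (.of_forall fun ω => (hCf _).trans (le_abs_self _))
    filter_upwards [this] with ω h
    exact (norm_sub_le _ _).trans (add_le_add ((hCf _).trans (le_abs_self _)) h)
  have hGM : μ[G | M] =ᵐ[μ] 0 := by
    have h1 := condExp_sub hgi (integrable_condExp (m := m) (μ := μ) (f := fun ω => g (Y ω))) M
    have h2 : μ[μ[fun ω => g (Y ω) | m] | M] = μ[fun ω => g (Y ω) | m] :=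
      condExp_of_stronglyMeasurable hMle (stronglyMeasurable_condExp.mono hmM) integrable_condExp
    rw [h2] at h1
    filter_upwards [h1, hkey] with ω a1 a2
    rw [a1, Pi.sub_apply, a2, sub_self]; rfl
  rw [← integral_condExp hMle]
  have h := condExp_stronglyMeasurable_mul_of_bound hMle hFM hGi _ hFb
  rw [integral_eq_zero_of_ae]
  filter_upwards [h, hGM] with ω a1 a2
  rw [a1, Pi.mul_apply, a2]; simp

/-- under conditional independence the witness function vanishes and
`E[u₁] = 0` for any choice of locations. -/
theorem statement_5
    (dx dy dz : ℕ) (hdx : 1 ≤ dx) (hdy : 1 ≤ dy) (hdz : 1 ≤ dz)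
    {Ω : Type} [MeasurableSpace Ω] [StandardBorelSpace Ω] [Nonempty Ω]
    (μ : Measure Ω) [IsProbabilityMeasure μ]
    (X : Ω → Fin dx → ℝ) (Z : Ω → Fin dz → ℝ) (Y : Ω → Fin dy → ℝ)
    (hX : Measurable X) (hZ : Measurable Z) (hY : Measurable Y)
    (kX : ((Fin dx → ℝ) × (Fin dz → ℝ)) → ((Fin dx → ℝ) × (Fin dz → ℝ)) → ℝ) (kY : (Fin dy → ℝ) → (Fin dy → ℝ) → ℝ)
    (hkXm : Measurable fun q : ((Fin dx → ℝ) × (Fin dz → ℝ)) × ((Fin dx → ℝ) × (Fin dz → ℝ)) => kX q.1 q.2)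
    (hkYm : Measurable fun q : (Fin dy → ℝ) × (Fin dy → ℝ) => kY q.1 q.2)
    (hkXb : BoundedKernel kX) (hkYb : BoundedKernel kY)
    (e1 : ((Fin dx → ℝ) × (Fin dz → ℝ)) → (Fin dz → ℝ) → ℝ) (e2 : (Fin dy → ℝ) → (Fin dz → ℝ) → ℝ)
    (he1m : ∀ t1, Measurable (e1 t1)) (he2m : ∀ t2, Measurable (e2 t2))
    (he1 : ∀ t1, (fun ω => e1 t1 (Z ω)) =ᵐ[μ]
      μ[fun ω' => kX t1 (X ω', Z ω') | MeasurableSpace.comap Z inferInstance])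
    (he2 : ∀ t2, (fun ω => e2 t2 (Z ω)) =ᵐ[μ]
      μ[fun ω' => kY t2 (Y ω') | MeasurableSpace.comap Z inferInstance])
    (xS1 : Ω → Fin dx → ℝ) (zS1 : Ω → Fin dz → ℝ) (yS1 : Ω → Fin dy → ℝ)
    (hxS1 : Measurable xS1) (hzS1 : Measurable zS1) (hyS1 : Measurable yS1)
    (hlaw1 : μ.map (fun ω => ((xS1 ω, zS1 ω), yS1 ω)) = μ.map fun ω => ((X ω, Z ω), Y ω))
    (hH0 : CondIndepFun (MeasurableSpace.comap Z inferInstance) hZ.comap_le X Y μ) :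
    (∀ (t1 : ((Fin dx → ℝ) × (Fin dz → ℝ))) (t2 : Fin dy → ℝ), witness μ kX kY X Z Y t1 t2 = 0) ∧
      ∀ (J : ℕ) (t : Fin J → (((Fin dx → ℝ) × (Fin dz → ℝ)) × (Fin dy → ℝ))) (j : Fin J),
        ∫ ω, (kX (t j).1 (xS1 ω, zS1 ω) - e1 (t j).1 (zS1 ω)) *
            (kY (t j).2 (yS1 ω) - e2 (t j).2 (zS1 ω)) ∂μ = 0 := by
  obtain ⟨CX, hCX⟩ := hkXb
  obtain ⟨CY, hCY⟩ := hkYb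
  have hkX (t1) : Measurable (kX t1) := hkXm.comp measurable_prodMk_left
  have hkY (t2) : Measurable (kY t2) := hkYm.comp measurable_prodMk_left
  have main : ∀ t1 t2, witness μ kX kY X Z Y t1 t2 = 0 := fun t1 t2 =>
    ci_aux μ X Z Y hX hZ hY hH0 (kX t1) (kY t2) (hkX t1) (hkY t2) CX CY (hCX t1) (hCY t2)
  refine ⟨main, fun J t j => ?_⟩
  let φ : (((Fin dx → ℝ) × (Fin dz → ℝ)) × (Fin dy → ℝ)) → ℝ := fun p =>
    (kX (t j).1 p.1 - e1 (t j).1 p.1.2) * (kY (t j).2 p.2 - e2 (t j).2 p.1.2)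
  have hφ : Measurable φ := by
    have a1 := hkX (t j).1
    have a2 := hkY (t j).2
    have a3 := he1m (t j).1
    have a4 := he2m (t j).2
    fun_prop
  have e : ∫ ω, φ ((xS1 ω, zS1 ω), yS1 ω) ∂μ = ∫ ω, φ ((X ω, Z ω), Y ω) ∂μ := by
    rw [← integral_map (φ := fun ω => ((xS1 ω, zS1 ω), yS1 ω)) (by fun_prop)
        hφ.aestronglyMeasurable, hlaw1,
      integral_map (by fun_prop) hφ.aestronglyMeasurable]
  refine e.trans (Eq.trans ?_ (main (t j).1 (t j).2))
  refine integral_congr_ae ?_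
  filter_upwards [he1 (t j).1, he2 (t j).2] with ω h1 h2
  simp only [φ]
  rw [← h1, ← h2]
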